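/- Let p be a prime and let g(x) = b_e x^e + ⋯ + b_0 ∈ ℚ[x] have degree e ≥ 1 with b_0 ≠ 0, ν_p(b_e) = 0, and ν_p(b_i) ≥ 1 for every 0 ≤ i ≤ e−1 with b_i ≠ 0. Suppose NP_p(g) has successive vertices (0,0), (e−m_1, r_1), …, (e−m_{t−1}, r_{t−1}), (e, r_t), where e = m_0 > m_1 > ⋯ > m_t = 0 and r_i = ν_p(b_{m_i}), and set λ_1 = r_1/(e−m_1). Assume r_t ≤ λ_1(2e−1) and, in addition, gcd(e·(m_s − m_{s+1}), r_{s+1} − r_s) = 1 for every 0 ≤ s < t. Then for every integer n ≥ 1 the number of irreducible factors of the n-th iterate g^n(x) over ℚ, counted with multiplicity, is at most t. -/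

import Mathlib

open Polynomial

/-- The `n`-th compositional iterate of `f`: `f^0 = X`, `f^{n+1} = f ∘ f^n`. -/
noncomputable def polyIter (f : Polynomial ℚ) : ℕ → Polynomial ℚ
  | 0 => Polynomial.X
  | n + 1 => f.comp (polyIter f n)

/-- The `p`-adic valuation of a rational number, viewed as a rational number. -/
def nuQ (p : ℕ) (x : ℚ) : ℚ := (padicValRat p x : ℚ)

/-- `NP_p(h)` has successive vertices `(xs 0, ys 0), …, (xs t, ys t)`:
the corresponding coefficients are nonzero and have the prescribed valuations,
the slopes are strictly increasing, and every point of the Newton diagram lies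
on or above the polygon. -/
def HasNPVertices (p : ℕ) (h : Polynomial ℚ) (t : ℕ) (xs : ℕ → ℕ) (ys : ℕ → ℚ) : Prop :=
  h.coeff 0 ≠ 0 ∧
  xs 0 = 0 ∧ xs t = h.natDegree ∧
  (∀ s, s < t → xs s < xs (s + 1)) ∧
  (∀ s, s ≤ t → h.coeff (h.natDegree - xs s) ≠ 0 ∧
      nuQ p (h.coeff (h.natDegree - xs s)) = ys s) ∧
  (∀ s, 1 ≤ s → s < t →
      (ys s - ys (s - 1)) / ((xs s : ℚ) - (xs (s - 1) : ℚ)) <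
        (ys (s + 1) - ys s) / ((xs (s + 1) : ℚ) - (xs s : ℚ))) ∧
  (∀ s, 1 ≤ s → s ≤ t → ∀ i, h.coeff i ≠ 0 →
      xs (s - 1) ≤ h.natDegree - i → h.natDegree - i ≤ xs s →
      ys (s - 1) + ((ys s - ys (s - 1)) / ((xs s : ℚ) - (xs (s - 1) : ℚ))) *
          (((h.natDegree - i : ℕ) : ℚ) - (xs (s - 1) : ℚ)) ≤ nuQ p (h.coeff i))

/-- The number of irreducible factors of a polynomial over `ℚ`,
counted with multiplicity. -/
noncomputable def numFactors (P : Polynomial ℚ) : ℕ :=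
  (UniqueFactorizationMonoid.factors P).card

/-- `f` is `p^r`-pure. -/
def IsPpure (p r : ℕ) (f : Polynomial ℚ) : Prop :=
  f.coeff 0 ≠ 0 ∧
  padicValRat p f.leadingCoeff = 0 ∧
  padicValRat p (f.coeff 0) = (r : ℤ) ∧
  ∀ i, 0 < i → i < f.natDegree → f.coeff i ≠ 0 →
    (r : ℚ) / (f.natDegree : ℚ) ≤ nuQ p (f.coeff i) / ((f.natDegree : ℚ) - (i : ℚ))

theorem lt_mul_padicValRat_sum {p : ℕ} [Fact p.Prime] {ι : Type*} {A θ : ℤ} (hA : 0 < A)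
    (S : Finset ι) (F : ι → ℚ)
    (h : ∀ i ∈ S, F i ≠ 0 → θ < A * padicValRat p (F i)) (hS : ∑ i ∈ S, F i ≠ 0) :
    θ < A * padicValRat p (∑ i ∈ S, F i) := by
  classical
  induction S using Finset.induction_on with
  | empty => simp at hS
  | insert a S ha ih =>
    rw [Finset.sum_insert ha] at hS ⊢
    have hS' := fun i hi => h i (Finset.mem_insert_of_mem hi)
    by_cases h1 : F a = 0
    · rw [h1, zero_add] at hS ⊢
      exact ih hS' hS
    by_cases h2 : ∑ i ∈ S, F i = 0
    · rw [h2, add_zero]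
      exact h a (Finset.mem_insert_self a S) h1
    have h3 := h a (Finset.mem_insert_self a S) h1
    have h4 := ih hS' h2
    have h5 := padicValRat.min_le_padicValRat_add (p := p) hS
    rcases min_le_iff.mp h5 with h6 | h6 <;> nlinarith

theorem padicValRat_sum_eq_of_lt {p : ℕ} [Fact p.Prime] {ι : Type*} [DecidableEq ι]
    (S : Finset ι) (F : ι → ℚ) {k : ι} (hk : k ∈ S) (hFk : F k ≠ 0)
    (h : ∀ i ∈ S, i ≠ k → F i ≠ 0 → padicValRat p (F k) < padicValRat p (F i)) :
    ∑ i ∈ S, F i ≠ 0 ∧ padicValRat p (∑ i ∈ S, F i) = padicValRat p (F k) := by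
  rw [← Finset.add_sum_erase S F hk]
  by_cases h0 : ∑ i ∈ S.erase k, F i = 0
  · simp [h0, hFk]
  have h1 : padicValRat p (F k) < padicValRat p (∑ i ∈ S.erase k, F i) := by
    have := lt_mul_padicValRat_sum (p := p) (A := 1) (θ := padicValRat p (F k)) one_pos
      (S.erase k) F (fun i hi h' => by
        rw [one_mul]
        exact h i (Finset.mem_of_mem_erase hi) (Finset.ne_of_mem_erase hi) h') h0
    rwa [one_mul] at this
  have h2 : F k + ∑ i ∈ S.erase k, F i ≠ 0 := by
    intro h3
    rw [eq_neg_of_add_eq_zero_left h3, padicValRat.neg] at h1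
    exact lt_irrefl _ h1
  exact ⟨h2, padicValRat.add_eq_of_lt h2 hFk h0 h1⟩

/-- The weight `A * ν_p(c) + B * i` of the terms `c x ^ i` of `f` is minimal exactly at `i = k`. -/
def IsDominant (p : ℕ) (A B : ℤ) (f : Polynomial ℚ) (k : ℕ) : Prop :=
  f.coeff k ≠ 0 ∧ ∀ i, i ≠ k → f.coeff i ≠ 0 →
    A * padicValRat p (f.coeff k) + B * k < A * padicValRat p (f.coeff i) + B * i

namespace IsDominant

variable {p : ℕ} {A B : ℤ} {f g : Polynomial ℚ} {k l : ℕ}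

theorem le (hf : IsDominant p A B f k) {i : ℕ} (hi : f.coeff i ≠ 0) :
    A * padicValRat p (f.coeff k) + B * k ≤ A * padicValRat p (f.coeff i) + B * i := by
  by_cases h : i = k
  · rw [h]
  · exact (hf.2 i h hi).le

theorem unique (hf : IsDominant p A B f k) (hf' : IsDominant p A B f l) : k = l := by
  by_contra h
  exact lt_asymm (hf.2 l (Ne.symm h) hf'.1) (hf'.2 k h hf.1)

/-- The dominant exponent decreases when the slope `B / A` increases. -/
theorem anti {A' B' : ℤ} (hA : 0 < A) (hA' : 0 < A') (hf : IsDominant p A B f k)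
    (hf' : IsDominant p A' B' f l) (h : B * A' ≤ B' * A) : l ≤ k := by
  by_contra! hkl
  have h1 := hf.2 l hkl.ne' hf'.1
  have h2 := hf'.2 k hkl.ne hf.1
  have h3 : (k : ℤ) < l := by exact_mod_cast hkl
  nlinarith [mul_lt_mul_of_pos_left h1 hA', mul_lt_mul_of_pos_left h2 hA,
    mul_nonneg (sub_nonneg.mpr h) (sub_pos.mpr h3).le]

theorem sum [Fact p.Prime] {ι : Type*} (hA : 0 < A) (S : Finset ι)
    (P : ι → Polynomial ℚ) {j₀ : ι} (hj₀ : j₀ ∈ S) (hd : IsDominant p A B (P j₀) k)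
    (h : ∀ j ∈ S, j ≠ j₀ → ∀ i, (P j).coeff i ≠ 0 →
      A * padicValRat p ((P j₀).coeff k) + B * k < A * padicValRat p ((P j).coeff i) + B * i) :
    IsDominant p A B (∑ j ∈ S, P j) k ∧
      padicValRat p ((∑ j ∈ S, P j).coeff k) = padicValRat p ((P j₀).coeff k) := by
  classical
  have hk := padicValRat_sum_eq_of_lt (p := p) S (fun j => (P j).coeff k) hj₀ hd.1
    (fun j hj hne h0 => by
      have := h j hj hne k h0
      exact lt_of_mul_lt_mul_left (by linarith) hA.le)
  refine ⟨⟨?_, fun i hi hi0 => ?_⟩, ?_⟩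
  · rw [finsetSum_coeff]; exact hk.1
  · rw [finsetSum_coeff] at hi0
    rw [finsetSum_coeff, finsetSum_coeff, hk.2]
    have := lt_mul_padicValRat_sum (p := p) hA S (fun j => (P j).coeff i)
      (θ := A * padicValRat p ((P j₀).coeff k) + B * k - B * i) (fun j hj h0 => by
        by_cases hjj : j = j₀
        · subst hjj
          have := hd.2 i hi h0
          linarith
        · have := h j hj hjj i h0
          linarith) hi0
    linarith
  · rw [finsetSum_coeff]; exact hk.2

theorem mul [Fact p.Prime] (hA : 0 < A) (hf : IsDominant p A B f k)
    (hg : IsDominant p A B g l) :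
    IsDominant p A B (f * g) (k + l) ∧ padicValRat p ((f * g).coeff (k + l)) =
      padicValRat p (f.coeff k) + padicValRat p (g.coeff l) := by
  have hexp : f * g = ∑ j ∈ f.support, C (f.coeff j) * (X ^ j * g) := by
    conv_lhs => rw [f.as_sum_support_C_mul_X_pow, Finset.sum_mul]
    simp only [mul_assoc]
  have hterm : ∀ j i, (C (f.coeff j) * (X ^ j * g)).coeff i ≠ 0 →
      ∃ a, i = j + a ∧ g.coeff a ≠ 0 ∧ f.coeff j ≠ 0 ∧
        padicValRat p ((C (f.coeff j) * (X ^ j * g)).coeff i) =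
          padicValRat p (f.coeff j) + padicValRat p (g.coeff a) := by
    intro j i hi
    rw [coeff_C_mul, coeff_X_pow_mul'] at hi ⊢
    split_ifs at hi ⊢ with hji
    · have h1 := left_ne_zero_of_mul hi
      have h2 := right_ne_zero_of_mul hi
      exact ⟨i - j, by omega, h2, h1, padicValRat.mul h1 h2⟩
    · simp at hi
  have hval : (C (f.coeff k) * (X ^ k * g)).coeff (k + l) = f.coeff k * g.coeff l := by
    simp [coeff_C_mul, coeff_X_pow_mul']
  have hv := padicValRat.mul (p := p) hf.1 hg.1
  have main := sum (p := p) (B := B) (k := k + l) hA f.support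
    (fun j => C (f.coeff j) * (X ^ j * g)) (mem_support_iff.mpr hf.1)
    ⟨by rw [hval]; exact mul_ne_zero hf.1 hg.1, fun i hi h0 => ?_⟩ ?_
  · rw [hexp]
    refine ⟨main.1, ?_⟩
    rw [main.2, hval, hv]
  · obtain ⟨a, rfl, ha, -, h⟩ := hterm k i h0
    rw [h, hval, hv]
    have := hg.2 a (by omega) ha
    push_cast
    linarith
  · intro j _ hjk i h0
    obtain ⟨a, rfl, ha, hj, h⟩ := hterm j i h0
    rw [h, hval, hv]
    have h1 := hf.2 j hjk hj
    have h2 := hg.le ha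
    push_cast
    linarith

theorem C_self {c : ℚ} (hc : c ≠ 0) : IsDominant p A B (C c) 0 :=
  ⟨by simpa using hc, fun i hi h => absurd (coeff_C_of_ne_zero hi) h⟩

theorem pow [Fact p.Prime] (hA : 0 < A) (hg : IsDominant p A B g k)
    (h0 : padicValRat p (g.coeff k) = 0) (j : ℕ) :
    IsDominant p A B (g ^ j) (k * j) ∧ padicValRat p ((g ^ j).coeff (k * j)) = 0 := by
  induction j with
  | zero =>
    have := C_self (p := p) (A := A) (B := B) (c := 1) one_ne_zero
    simpa using this
  | succ j ih =>
    rw [pow_succ, mul_add, mul_one]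
    have := ih.1.mul hA hg
    exact ⟨this.1, by rw [this.2, ih.2, h0, add_zero]⟩

theorem comp [Fact p.Prime] {e : ℕ} (hA : 0 < A) (hg : IsDominant p A B g e)
    (h0 : padicValRat p (g.coeff e) = 0) (hf : IsDominant p A (e * B) f k) :
    IsDominant p A B (f.comp g) (e * k) := by
  have hexp : f.comp g = ∑ j ∈ f.support, C (f.coeff j) * g ^ j := by
    rw [comp_eq_sum_left, sum_def]
  have hterm : ∀ j, f.coeff j ≠ 0 → IsDominant p A B (C (f.coeff j) * g ^ j) (e * j) ∧
      padicValRat p ((C (f.coeff j) * g ^ j).coeff (e * j)) = padicValRat p (f.coeff j) := by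
    intro j hj
    have h1 := hg.pow hA h0 j
    have h2 := (C_self (p := p) hj).mul hA h1.1
    rw [zero_add, h1.2, add_zero, coeff_C_zero] at h2
    exact h2
  rw [hexp]
  refine (sum hA f.support (fun j => C (f.coeff j) * g ^ j) (mem_support_iff.mpr hf.1)
    (hterm k hf.1).1 ?_).1
  intro j hj hjk i hi
  have hj := mem_support_iff.mp hj
  have h1 := (hterm j hj).1.le hi
  have h2 := hf.2 j hjk hj
  rw [(hterm j hj).2] at h1
  rw [(hterm k hf.1).2]
  push_cast at h1 ⊢
  linarith

end IsDominant

/-- Every nonzero polynomial of degree less than `K` has a dominant exponent for a weight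
`K * (Q * ν_p + R * i) ± i`. -/
theorem exists_isDominant {p : ℕ} {K Q R σ : ℤ} (hσ : σ = 1 ∨ σ = -1) {f : Polynomial ℚ}
    (hf : f ≠ 0) (hK : (f.natDegree : ℤ) < K) :
    ∃ k, IsDominant p (K * Q) (K * R + σ) f k := by
  obtain ⟨k, hk, hmin⟩ := Finset.exists_min_image f.support
    (fun i => K * Q * padicValRat p (f.coeff i) + (K * R + σ) * i)
    (support_nonempty.mpr hf)
  refine ⟨k, mem_support_iff.mp hk, fun i hik hi => ?_⟩
  refine lt_of_le_of_ne (hmin i (mem_support_iff.mpr hi)) fun heq => hik ?_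
  have h1 : (k : ℤ) ≤ f.natDegree := by exact_mod_cast le_natDegree_of_mem_supp k hk
  have h2 : (i : ℤ) ≤ f.natDegree := by exact_mod_cast le_natDegree_of_ne_zero hi
  have h3 : K ∣ (i : ℤ) - k := by
    rcases hσ with rfl | rfl
    · exact ⟨Q * padicValRat p (f.coeff k) + R * k - (Q * padicValRat p (f.coeff i) + R * i),
        by linarith⟩
    · exact ⟨-(Q * padicValRat p (f.coeff k) + R * k - (Q * padicValRat p (f.coeff i) + R * i)),
        by linarith⟩
  have h4 : (i : ℤ) - k = 0 := Int.eq_zero_of_abs_lt_dvd h3 (by rw [abs_lt]; constructor <;> omega)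
  omega

/-- The exponents that are dominant just before and just after the slope `R / Q` in lowest terms
differ by a multiple of `Q`. -/
theorem IsDominant.dvd_sub {p : ℕ} {K Q R : ℤ} {f : Polynomial ℚ} {k l : ℕ}
    (hK : (f.natDegree : ℤ) < K) (hQR : IsCoprime Q R)
    (hk : IsDominant p (K * Q) (K * R + -1) f k) (hl : IsDominant p (K * Q) (K * R + 1) f l) :
    Q ∣ (k : ℤ) - l := by
  have h1 : (k : ℤ) ≤ f.natDegree := by exact_mod_cast le_natDegree_of_ne_zero hk.1
  have h2 : (l : ℤ) ≤ f.natDegree := by exact_mod_cast le_natDegree_of_ne_zero hl.1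
  have h3 := hk.le hl.1
  have h4 := hl.le hk.1
  set v := padicValRat p (f.coeff k)
  set w := padicValRat p (f.coeff l)
  have h5 : Q * v + R * k < Q * w + R * l + 1 :=
    lt_of_mul_lt_mul_left (a := K) (by linarith) (by omega)
  have h6 : Q * w + R * l < Q * v + R * k + 1 :=
    lt_of_mul_lt_mul_left (a := K) (by linarith) (by omega)
  refine hQR.dvd_of_dvd_mul_left ⟨w - v, ?_⟩
  linarith

/-- The dominant exponent of `f`, where there is one. -/
noncomputable def dominantExponent (p : ℕ) (A B : ℤ) (f : Polynomial ℚ) : ℕ :=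
  Classical.epsilon (IsDominant p A B f)

theorem IsDominant.dominantExponent_eq {p : ℕ} {A B : ℤ} {f : Polynomial ℚ} {k : ℕ}
    (h : IsDominant p A B f k) : dominantExponent p A B f = k :=
  IsDominant.unique (Classical.epsilon_spec (p := IsDominant p A B f) ⟨k, h⟩) h

theorem isDominant_dominantExponent {p : ℕ} {K Q R σ : ℤ} (hσ : σ = 1 ∨ σ = -1)
    {f : Polynomial ℚ} (hf : f ≠ 0) (hK : (f.natDegree : ℤ) < K) :
    IsDominant p (K * Q) (K * R + σ) f (dominantExponent p (K * Q) (K * R + σ) f) :=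
  Classical.epsilon_spec (exists_isDominant hσ hf hK)

/-- The width of the edge of slope `R / Q` in the Newton polygon of `f`, for `K` large. -/
noncomputable def edgeWidth (p : ℕ) (K Q R : ℤ) (f : Polynomial ℚ) : ℤ :=
  dominantExponent p (K * Q) (K * R + -1) f - dominantExponent p (K * Q) (K * R + 1) f

section edgeWidth

variable {p : ℕ} {K Q R : ℤ} {f g : Polynomial ℚ}

theorem edgeWidth_mul [Fact p.Prime] (hQ : 0 < Q) (hf : f ≠ 0) (hg : g ≠ 0)
    (hK : ((f * g).natDegree : ℤ) < K) :
    edgeWidth p K Q R (f * g) = edgeWidth p K Q R f + edgeWidth p K Q R g := by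
  rw [natDegree_mul hf hg] at hK
  push_cast at hK
  have hA : 0 < K * Q := mul_pos (by omega) hQ
  have key : ∀ σ : ℤ, σ = 1 ∨ σ = -1 → dominantExponent p (K * Q) (K * R + σ) (f * g) =
      dominantExponent p (K * Q) (K * R + σ) f + dominantExponent p (K * Q) (K * R + σ) g :=
    fun σ hσ => ((isDominant_dominantExponent hσ hf (by omega)).mul hA
      (isDominant_dominantExponent hσ hg (by omega))).1.dominantExponent_eq
  rw [edgeWidth, edgeWidth, edgeWidth, key 1 (.inl rfl), key (-1) (.inr rfl)]
  push_cast
  ring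

theorem edgeWidth_nonneg (hQ : 0 < Q) (hf : f ≠ 0) (hK : (f.natDegree : ℤ) < K) :
    0 ≤ edgeWidth p K Q R f := by
  have hA : 0 < K * Q := mul_pos (by omega) hQ
  have := (isDominant_dominantExponent (p := p) (Q := Q) (R := R) (.inr rfl) hf hK).anti hA hA
    (isDominant_dominantExponent (Q := Q) (R := R) (.inl rfl) hf hK) (by nlinarith)
  rw [edgeWidth]
  omega

theorem dvd_edgeWidth (hQR : IsCoprime Q R) (hf : f ≠ 0) (hK : (f.natDegree : ℤ) < K) :
    Q ∣ edgeWidth p K Q R f :=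
  IsDominant.dvd_sub hK hQR (isDominant_dominantExponent (.inr rfl) hf hK)
    (isDominant_dominantExponent (.inl rfl) hf hK)

end edgeWidth

/-- The widths of edges with increasing slopes add up to at most the degree. -/
theorem sum_edgeWidth_le {p t : ℕ} {K : ℤ} {Q R : ℕ → ℤ} {f : Polynomial ℚ}
    (hQ : ∀ s < t, 0 < Q s) (hQK : ∀ s < t, 2 * Q s < K)
    (hslope : ∀ s, s + 1 < t → R s * Q (s + 1) < R (s + 1) * Q s)
    (hf : f ≠ 0) (hK : (f.natDegree : ℤ) < K) :
    ∑ s ∈ Finset.range t, edgeWidth p K (Q s) (R s) f ≤ f.natDegree := by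
  have hK0 : 0 < K := by omega
  have hdom : ∀ s σ, σ = 1 ∨ σ = -1 → IsDominant p (K * Q s) (K * R s + σ) f
      (dominantExponent p (K * Q s) (K * R s + σ) f) :=
    fun s σ hσ => isDominant_dominantExponent hσ hf hK
  have hdeg : ∀ s, (dominantExponent p (K * Q s) (K * R s + -1) f : ℤ) ≤ f.natDegree :=
    fun s => by exact_mod_cast le_natDegree_of_ne_zero (hdom s (-1) (.inr rfl)).1
  have key : ∀ j < t, ∑ s ∈ Finset.range (j + 1), edgeWidth p K (Q s) (R s) f +
      dominantExponent p (K * Q j) (K * R j + 1) f ≤ f.natDegree := by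
    intro j
    induction j with
    | zero => intro _; simpa [edgeWidth] using hdeg 0
    | succ j ih =>
      intro hj
      have h1 := ih (by omega)
      have h2 := (hdom j 1 (.inl rfl)).anti (mul_pos hK0 (hQ j (by omega)))
        (mul_pos hK0 (hQ (j + 1) hj)) (hdom (j + 1) (-1) (.inr rfl)) (by
          have h3 := hslope j hj
          have h4 := hQK j (by omega)
          have h5 := hQK (j + 1) hj
          nlinarith [mul_le_mul_of_nonneg_left (Int.add_one_le_iff.mpr h3) (mul_pos hK0 hK0).le])
      rw [Finset.sum_range_succ]
      rw [edgeWidth] at *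
      omega
  rcases t with _ | t
  · simp
  · have := key t (by omega)
    omega

theorem Multiset.sum_map_eq_of_additive_of_natDegree_lt {K : ℤ} {Φ : Polynomial ℚ → ℤ}
    (hΦ : ∀ f g : Polynomial ℚ, f ≠ 0 → g ≠ 0 → ((f * g).natDegree : ℤ) < K →
      Φ (f * g) = Φ f + Φ g)
    (S : Multiset (Polynomial ℚ)) (hS : 0 ∉ S) (hK : (S.prod.natDegree : ℤ) < K) :
    (S.map Φ).sum = Φ S.prod := by
  induction S using Multiset.induction_on with
  | empty =>
    have := hΦ 1 1 one_ne_zero one_ne_zero (by simpa using hK)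
    simp only [mul_one] at this
    simp only [Multiset.map_zero, Multiset.sum_zero, Multiset.prod_zero]
    omega
  | cons a S ih =>
    rw [Multiset.mem_cons, not_or] at hS
    have h0 : S.prod ≠ 0 := Multiset.prod_ne_zero hS.2
    rw [Multiset.prod_cons] at hK
    rw [Multiset.map_cons, Multiset.sum_cons, Multiset.prod_cons,
      hΦ a S.prod (Ne.symm hS.1) h0 hK, ih hS.2]
    rw [natDegree_mul (Ne.symm hS.1) h0] at hK
    push_cast at hK
    omega

/-- A product of nonconstant polynomials whose Newton polygon consists of `t` edges without
interior lattice points has at most `t` factors. -/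
theorem card_le_of_edgeWidth_prod {p t : ℕ} [Fact p.Prime] {K : ℤ} {Q R : ℕ → ℤ}
    (hQ : ∀ s < t, 0 < Q s) (hQK : ∀ s < t, 2 * Q s < K)
    (hslope : ∀ s, s + 1 < t → R s * Q (s + 1) < R (s + 1) * Q s)
    (hQR : ∀ s < t, IsCoprime (Q s) (R s))
    (S : Multiset (Polynomial ℚ)) (hS : ∀ h ∈ S, 0 < h.natDegree)
    (hK : (S.prod.natDegree : ℤ) < K)
    (hdeg : ∑ s ∈ Finset.range t, Q s = S.prod.natDegree)
    (hwidth : ∀ s < t, edgeWidth p K (Q s) (R s) S.prod = Q s) :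
    S.card ≤ t := by
  have hS0 : 0 ∉ S := fun h => by simpa using hS 0 h
  have hprod0 : S.prod ≠ 0 := Multiset.prod_ne_zero hS0
  have hhK : ∀ h ∈ S, (h.natDegree : ℤ) < K := fun h hh => lt_of_le_of_lt
    (by exact_mod_cast natDegree_le_of_dvd (Multiset.dvd_prod hh) hprod0) hK
  have hh0 : ∀ h ∈ S, h ≠ 0 := fun h hh h0 => hS0 (h0 ▸ hh)
  set Φ : Polynomial ℚ → ℤ := fun f =>
    f.natDegree - ∑ s ∈ Finset.range t, edgeWidth p K (Q s) (R s) f with hΦdef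
  set Ψ : Polynomial ℚ → ℤ := fun f =>
    ∑ s ∈ Finset.range t, edgeWidth p K (Q s) (R s) f / Q s with hΨdef
  have hΦ : (S.map Φ).sum = Φ S.prod := by
    refine Multiset.sum_map_eq_of_additive_of_natDegree_lt (fun f g hf hg h => ?_) S hS0 hK
    simp only [hΦdef]
    rw [Finset.sum_congr rfl fun s hs =>
      edgeWidth_mul (p := p) (R := R s) (hQ s (Finset.mem_range.mp hs)) hf hg h,
      Finset.sum_add_distrib, natDegree_mul hf hg]
    push_cast
    ring
  have hΨ : (S.map Ψ).sum = Ψ S.prod := by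
    refine Multiset.sum_map_eq_of_additive_of_natDegree_lt (fun f g hf hg h => ?_) S hS0 hK
    simp only [hΨdef]
    rw [← Finset.sum_add_distrib]
    refine Finset.sum_congr rfl fun s hs => ?_
    have hs := Finset.mem_range.mp hs
    rw [edgeWidth_mul (hQ s hs) hf hg h]
    refine Int.add_ediv_of_dvd_left (dvd_edgeWidth (hQR s hs) hf ?_)
    rw [natDegree_mul hf hg] at h
    push_cast at h
    omega
  have hΦprod : Φ S.prod = 0 := by
    simp only [hΦdef]
    rw [Finset.sum_congr rfl fun s hs => hwidth s (Finset.mem_range.mp hs), hdeg, sub_self]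
  have hΨprod : Ψ S.prod = t := by
    simp only [hΨdef]
    rw [Finset.sum_congr rfl fun s hs => show _ = (1 : ℤ) by
      rw [hwidth s (Finset.mem_range.mp hs),
        Int.ediv_self (hQ s (Finset.mem_range.mp hs)).ne']]
    simp
  have hΦnonneg : ∀ h ∈ S, 0 ≤ Φ h := fun h hh =>
    sub_nonneg.mpr (sum_edgeWidth_le hQ hQK hslope (hh0 h hh) (hhK h hh))
  have hΦzero : ∀ h ∈ S, Φ h = 0 := fun h hh =>
    Multiset.all_zero_of_le_zero_le_of_sum_eq_zero
      (by simpa using hΦnonneg) (hΦ.trans hΦprod) _ (Multiset.mem_map_of_mem Φ hh)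
  have hΨpos : ∀ h ∈ S, 1 ≤ Ψ h := by
    intro h hh
    have hz := hΦzero h hh
    have hd := hS h hh
    simp only [hΦdef, sub_eq_zero] at hz
    have hsum : 0 < ∑ s ∈ Finset.range t, edgeWidth p K (Q s) (R s) h := by omega
    obtain ⟨s, hs, hpos⟩ := Finset.exists_lt_of_sum_lt (f := fun _ => (0 : ℤ))
      (by simpa using hsum)
    have hst := Finset.mem_range.mp hs
    have hle := Finset.single_le_sum (f := fun s => edgeWidth p K (Q s) (R s) h / Q s)
      (fun j hj => Int.ediv_nonneg
        (edgeWidth_nonneg (hQ j (Finset.mem_range.mp hj)) (hh0 h hh) (hhK h hh))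
        (hQ j (Finset.mem_range.mp hj)).le) hs
    have hdvd := Int.le_of_dvd hpos (dvd_edgeWidth (hQR s hst) (hh0 h hh) (hhK h hh))
    exact le_trans ((Int.le_ediv_iff_mul_le (hQ s hst)).mpr (by simpa using hdvd)) hle
  have hcard : (S.card : ℤ) ≤ (S.map Ψ).sum := by
    have := Multiset.card_nsmul_le_sum (s := S.map Ψ) (a := (1 : ℤ)) (by simpa using hΨpos)
    simpa using this
  rw [hΨ, hΨprod] at hcard
  exact_mod_cast hcard

/-- A point on or above one edge of a convex polygonal chain is on or above the line through
every other edge, and strictly above it if it does not project to that edge. -/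
theorem le_of_mem_edge {t : ℕ} {m r l : ℕ → ℚ} (hm : ∀ s < t, m (s + 1) < m s)
    (hr : ∀ s < t, r (s + 1) = r s + l s * (m s - m (s + 1)))
    (hl : ∀ s, s + 1 < t → l s < l (s + 1)) {x y : ℚ} {u : ℕ} (hu : u < t)
    (hxu : m (u + 1) ≤ x) (hux : x ≤ m u) (hy : r u + l u * (m u - x) ≤ y) {s : ℕ} (hs : s < t) :
    r s + l s * (m s - x) ≤ y ∧
      (m s < x ∨ x < m (s + 1) → r s + l s * (m s - x) < y) := by
  have hstep : ∀ j, j + 1 < t →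
      r (j + 1) + l (j + 1) * (m (j + 1) - x) =
        r j + l j * (m j - x) + (l (j + 1) - l j) * (m (j + 1) - x) := by
    intro j hj
    rw [hr j (by omega)]
    ring
  have hup : ∀ j, u ≤ j → j < t →
      m (j + 1) ≤ x ∧ r j + l j * (m j - x) ≤ r u + l u * (m u - x) := by
    intro j huj
    induction j, huj using Nat.le_induction with
    | base => exact fun _ => ⟨hxu, le_rfl⟩
    | succ j huj ih =>
      intro hj
      obtain ⟨h1, h2⟩ := ih (by omega)
      refine ⟨(hm (j + 1) hj).le.trans h1, ?_⟩
      rw [hstep j hj]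
      nlinarith [hl j hj]
  have hdown : ∀ k j, j + k = u →
      x ≤ m j ∧ r j + l j * (m j - x) ≤ r u + l u * (m u - x) := by
    intro k
    induction k with
    | zero => rintro j rfl; exact ⟨hux, le_rfl⟩
    | succ k ih =>
      intro j hj
      obtain ⟨h1, h2⟩ := ih (j + 1) (by omega)
      refine ⟨h1.trans (hm j (by omega)).le, ?_⟩
      have := hstep j (by omega)
      nlinarith [hl j (by omega)]
  rcases lt_trichotomy u s with h | rfl | h
  · obtain ⟨j, rfl⟩ : ∃ j, s = j + 1 := ⟨s - 1, by omega⟩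
    refine ⟨(hup _ h.le hs).2.trans hy, fun hx => ?_⟩
    obtain ⟨h1, h2⟩ := hup j (by omega) (by omega)
    have h3 := (hup _ h.le hs).1
    have h4 : m (j + 1) < x := hx.resolve_right (not_lt.mpr h3)
    rw [hstep j hs]
    nlinarith [hl j hs]
  · exact ⟨hy, fun hx => absurd hx (by rw [not_or, not_lt, not_lt]; exact ⟨hux, hxu⟩)⟩
  · refine ⟨(hdown (u - s) s (by omega)).2.trans hy, fun hx => ?_⟩
    obtain ⟨h1, h2⟩ := hdown (u - (s + 1)) (s + 1) (by omega)
    have h3 := (hdown (u - s) s (by omega)).1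
    have h4 : x < m (s + 1) := hx.resolve_left (not_lt.mpr h3)
    have := hstep s (by omega)
    nlinarith [hl s (by omega)]

theorem le_of_strictAnti_chain {t : ℕ} {m : ℕ → ℕ} (hm : ∀ s < t, m (s + 1) < m s) :
    ∀ s ≤ t, m s ≤ m 0 := by
  intro s
  induction s with
  | zero => exact fun _ => le_rfl
  | succ s ih => exact fun hs => (hm s hs).le.trans (ih (by omega))

theorem exists_edge_of_le {t : ℕ} {m : ℕ → ℕ} (hmt : m t = 0) (ht : 0 < t) {i : ℕ}
    (hi : i ≤ m 0) : ∃ u < t, m (u + 1) ≤ i ∧ i ≤ m u := by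
  classical
  have hex : ∃ j, m (j + 1) ≤ i := ⟨t - 1, by rw [Nat.sub_add_cancel ht, hmt]; omega⟩
  refine ⟨Nat.find hex, ?_, Nat.find_spec hex, ?_⟩
  · have : Nat.find hex ≤ t - 1 :=
      Nat.find_min' hex (by rw [Nat.sub_add_cancel ht, hmt]; omega)
    omega
  · rcases hj : Nat.find hex with _ | j
    · exact hi
    · exact (not_le.mp (Nat.find_min hex (m := j) (by omega))).le

/-- The line supporting an edge of the Newton polygon, with denominators cleared. -/
theorem HasNPVertices.edge_facts {p : ℕ} {g : Polynomial ℚ} {e t : ℕ} {m : ℕ → ℕ}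
    (hge : g.natDegree = e) (hm0 : m 0 = e) (hmt : m t = 0) (ht : 0 < t)
    (hmdec : ∀ s, s < t → m (s + 1) < m s)
    (h : HasNPVertices p g t (fun s => e - m s) (fun s => nuQ p (g.coeff (m s))))
    {v D R : ℕ → ℤ} (hv : ∀ i, v i = padicValRat p (g.coeff i))
    (hD : ∀ s, D s = (m s : ℤ) - m (s + 1)) (hR : ∀ s, R s = v (m (s + 1)) - v (m s)) :
    (∀ s ≤ t, g.coeff (m s) ≠ 0) ∧
    (∀ s, s + 1 < t → R s * D (s + 1) < R (s + 1) * D s) ∧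
    (∀ s < t, ∀ i, g.coeff i ≠ 0 →
      D s * v (m s) + R s * m s ≤ D s * v i + R s * i ∧
      (m s < i ∨ i < m (s + 1) → D s * v (m s) + R s * m s < D s * v i + R s * i)) := by
  obtain ⟨-, -, -, -, hvert, hslope, hedge⟩ := h
  have hle : ∀ s ≤ t, m s ≤ e := hm0 ▸ le_of_strictAnti_chain hmdec
  have hcast : ∀ s ≤ t, ((e - m s : ℕ) : ℚ) = (e : ℚ) - m s := fun s hs =>
    Nat.cast_sub (hle s hs)
  have hnu : ∀ i, nuQ p (g.coeff i) = (v i : ℚ) := fun i => by rw [nuQ, hv]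
  have hDpos : ∀ s < t, (0 : ℚ) < D s := fun s hs => by
    have := hmdec s hs
    exact_mod_cast (show 0 < D s by rw [hD]; omega)
  have hDq : ∀ s, (D s : ℚ) = (m s : ℚ) - m (s + 1) := fun s => by rw [hD]; push_cast; rfl
  have hRq : ∀ s, (R s : ℚ) = (v (m (s + 1)) : ℚ) - v (m s) := fun s => by rw [hR]; push_cast; rfl
  have hslopeq : ∀ s, s + 1 < t → (R s : ℚ) / D s < R (s + 1) / D (s + 1) := by
    intro s hs
    have := hslope (s + 1) (by omega) hs
    simp only [Nat.add_sub_cancel, hnu, hcast s (by omega), hcast (s + 1) (by omega),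
      hcast (s + 1 + 1) (by omega)] at this
    rw [hRq, hRq, hDq, hDq]
    convert this using 2 <;> ring
  refine ⟨fun s hs => ?_, fun s hs => ?_, fun s hs i hi => ?_⟩
  · have := (hvert s hs).1
    simpa only [hge, Nat.sub_sub_self (hle s hs)] using this
  · have := hslopeq s hs
    rw [div_lt_div_iff₀ (hDpos s (by omega)) (hDpos (s + 1) hs)] at this
    exact_mod_cast this
  · have hie : i ≤ e := hge ▸ le_natDegree_of_ne_zero hi
    obtain ⟨u, hu, hui, hiu⟩ := exists_edge_of_le hmt ht (hm0.symm ▸ hie)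
    have hy := hedge (u + 1) (by omega) hu i hi
      (by simp only [Nat.add_sub_cancel, hge]; omega) (by simp only [hge]; omega)
    simp only [Nat.add_sub_cancel, hnu, hcast u (by omega), hcast (u + 1) (by omega), hge,
      Nat.cast_sub hie] at hy
    have hy' : (v (m u) : ℚ) + (R u : ℚ) / D u * ((m u : ℚ) - i) ≤ v i := by
      rw [hRq, hDq]
      convert hy using 3 <;> ring
    have key := le_of_mem_edge (t := t) (m := fun s => (m s : ℚ)) (r := fun s => (v (m s) : ℚ))
      (l := fun s => (R s : ℚ) / D s) (x := (i : ℚ)) (y := (v i : ℚ)) (u := u) (s := s)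
      (fun s hs => by exact_mod_cast hmdec s hs)
      (fun s hs => by
        have := hDpos s hs
        rw [← hDq, div_mul_cancel₀ _ this.ne', hRq]
        ring) hslopeq hu (by exact_mod_cast hui) (by exact_mod_cast hiu) hy' hs
    have hDs := hDpos s hs
    have hmul : (D s : ℚ) * ((v (m s) : ℚ) + (R s : ℚ) / D s * ((m s : ℚ) - i)) =
        D s * v (m s) + R s * m s - R s * i := by
      field_simp
      ring
    refine ⟨?_, fun hx => ?_⟩
    · have := mul_le_mul_of_nonneg_left key.1 hDs.le
      rw [hmul] at this
      have : (D s : ℚ) * v (m s) + R s * m s ≤ D s * v i + R s * i := by linarith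
      exact_mod_cast this
    · have := mul_lt_mul_of_pos_left (key.2 (by exact_mod_cast hx)) hDs
      rw [hmul] at this
      have : (D s : ℚ) * v (m s) + R s * m s < D s * v i + R s * i := by linarith
      exact_mod_cast this

theorem polyIter_succ_eq_comp (g : Polynomial ℚ) (n : ℕ) :
    polyIter g (n + 1) = (polyIter g n).comp g := by
  induction n with
  | zero => simp [polyIter]
  | succ n ih =>
    rw [show polyIter g (n + 1 + 1) = g.comp (polyIter g (n + 1)) from rfl, ih, ← comp_assoc,
      ← ih, show polyIter g (n + 1) = g.comp (polyIter g n) from rfl]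

theorem natDegree_polyIter (g : Polynomial ℚ) (n : ℕ) :
    (polyIter g n).natDegree = g.natDegree ^ n := by
  induction n with
  | zero => simp [polyIter]
  | succ n ih => rw [polyIter, natDegree_comp, ih, pow_succ']

theorem IsDominant.polyIter {p : ℕ} [Fact p.Prime] {A B : ℤ} {g : Polynomial ℚ} {e k : ℕ}
    (hA : 0 < A) (h0 : padicValRat p (g.coeff e) = 0) (n : ℕ)
    (hg : ∀ l < n, IsDominant p A (e ^ l * B) g e) (hk : IsDominant p A (e ^ n * B) g k) :
    IsDominant p A B (polyIter g (n + 1)) (e ^ n * k) := by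
  induction n generalizing B with
  | zero => simpa [_root_.polyIter] using hk
  | succ n ih =>
    rw [polyIter_succ_eq_comp, pow_succ', mul_assoc]
    refine IsDominant.comp hA (by simpa using hg 0 (by omega)) h0 (ih (fun l hl => ?_) ?_)
    · have := hg (l + 1) (by omega)
      rwa [pow_succ, mul_assoc] at this
    · rwa [pow_succ, mul_assoc] at hk

theorem numFactors_eq_one {F : Polynomial ℚ} (hF : F.natDegree = 1) : numFactors F = 1 :=
  UniqueFactorizationMonoid.card_factors_of_irreducible
    (irreducible_of_degree_eq_one ((degree_eq_iff_natDegree_eq_of_pos one_pos).mpr hF))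

/-- A polynomial whose Newton polygon consists of `t` edges without interior lattice points has
at most `t` irreducible factors. -/
theorem numFactors_le_of_isDominant {p t : ℕ} [Fact p.Prime] {K : ℤ} {Q R : ℕ → ℤ} {M : ℕ → ℕ}
    {F : Polynomial ℚ} (hF : F ≠ 0) (hK : 2 * (F.natDegree : ℤ) < K)
    (hQ : ∀ s < t, 0 < Q s) (hQM : ∀ s < t, Q s = (M s : ℤ) - M (s + 1))
    (hM0 : M 0 = F.natDegree) (hMt : M t = 0)
    (hslope : ∀ s, s + 1 < t → R s * Q (s + 1) < R (s + 1) * Q s)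
    (hQR : ∀ s < t, IsCoprime (Q s) (R s))
    (hleft : ∀ s < t, IsDominant p (K * Q s) (K * R s + -1) F (M s))
    (hright : ∀ s < t, IsDominant p (K * Q s) (K * R s + 1) F (M (s + 1))) :
    numFactors F ≤ t := by
  obtain ⟨u, hu⟩ := (UniqueFactorizationMonoid.factors_prod hF).symm
  obtain ⟨c, hc, hcu⟩ := isUnit_iff.mp u.isUnit
  rw [← hcu] at hu
  have hK0 : 0 < K := by omega
  have hdom : ∀ {A B k}, 0 < A → IsDominant p A B F k →
      IsDominant p A B (UniqueFactorizationMonoid.factors F).prod k := fun hA h => by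
    rw [← hu]
    exact (h.mul hA (IsDominant.C_self hc.ne_zero)).1
  have hdeg : (UniqueFactorizationMonoid.factors F).prod.natDegree = F.natDegree := by
    rw [← hu, natDegree_mul_C hc.ne_zero]
  have hMle : ∀ s < t, M s ≤ F.natDegree := fun s hs => le_natDegree_of_ne_zero (hleft s hs).1
  refine card_le_of_edgeWidth_prod (p := p) (K := K) hQ (fun s hs => ?_) hslope hQR _ (fun h hh => ?_)
    ?_ ?_ fun s hs => ?_
  · have := hQM s hs
    have := hMle s hs
    omega
  · exact (UniqueFactorizationMonoid.irreducible_of_factor h hh).natDegree_pos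
  · rw [hdeg]; omega
  · rw [Finset.sum_congr rfl fun s hs => hQM s (Finset.mem_range.mp hs),
      Finset.sum_range_sub' (fun s => (M s : ℤ)), hM0, hMt, hdeg]
    simp
  · have hA := mul_pos hK0 (hQ s hs)
    rw [edgeWidth, (hdom hA (hleft s hs)).dominantExponent_eq,
      (hdom hA (hright s hs)).dominantExponent_eq, hQM s hs]

/-- Section 6.3: under a coprimality condition on the edges, the number of
irreducible factors of every iterate is bounded by the number `t` of edges. -/
theorem iterate_factors_le_edges
    (p : ℕ) (hp : p.Prime)
    (g : Polynomial ℚ) (e t : ℕ) (m : ℕ → ℕ)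
    (hge : g.natDegree = e) (he1 : 1 ≤ e)
    (hb0 : g.coeff 0 ≠ 0)
    (hbe : padicValRat p (g.coeff e) = 0)
    (hbi : ∀ i, i < e → g.coeff i ≠ 0 → 1 ≤ padicValRat p (g.coeff i))
    (hm0 : m 0 = e) (hmt : m t = 0)
    (hmdec : ∀ s, s < t → m (s + 1) < m s)
    (hNPg : HasNPVertices p g t (fun s => e - m s) (fun s => nuQ p (g.coeff (m s))))
    (hbound : nuQ p (g.coeff 0) ≤
      nuQ p (g.coeff (m 1)) / ((e : ℚ) - (m 1 : ℚ)) * (2 * (e : ℚ) - 1))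
    (hgcd : ∀ s, s < t →
      Int.gcd ((e : ℤ) * ((m s : ℤ) - (m (s + 1) : ℤ)))
        (padicValRat p (g.coeff (m (s + 1))) - padicValRat p (g.coeff (m s))) = 1) :
    ∀ n : ℕ, 1 ≤ n → numFactors (polyIter g n) ≤ t := by
  intro n hn
  have : Fact p.Prime := ⟨hp⟩
  obtain ⟨n, rfl⟩ : ∃ k, n = k + 1 := ⟨n - 1, by omega⟩
  have ht : 0 < t := Nat.pos_of_ne_zero fun h => by rw [h] at hmt; omega
  rcases he1.eq_or_lt with rfl | he2
  · rw [numFactors_eq_one (by rw [natDegree_polyIter, hge, one_pow])]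
    exact ht
  obtain ⟨v, hv⟩ : ∃ v : ℕ → ℤ, ∀ i, v i = padicValRat p (g.coeff i) := ⟨_, fun _ => rfl⟩
  obtain ⟨D, hD⟩ : ∃ D : ℕ → ℤ, ∀ s, D s = (m s : ℤ) - m (s + 1) := ⟨_, fun _ => rfl⟩
  obtain ⟨R, hR⟩ : ∃ R : ℕ → ℤ, ∀ s, R s = v (m (s + 1)) - v (m s) := ⟨_, fun _ => rfl⟩
  obtain ⟨hne, hslope, hline⟩ := hNPg.edge_facts hge hm0 hmt ht hmdec hv hD hR
  have hDpos : ∀ s < t, 0 < D s := fun s hs => by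
    have := hmdec s hs
    rw [hD]; omega
  have hcop : ∀ s < t, IsCoprime ((e : ℤ) * D s) (R s) := fun s hs => by
    rw [Int.isCoprime_iff_gcd_eq_one, hD, hR, hv, hv]
    exact hgcd s hs
  have hve : v e = 0 := by rw [hv, hbe]
  have hline0 : ∀ i, g.coeff i ≠ 0 → R 0 * (e - i) ≤ D 0 * v i := fun i hi => by
    have := (hline 0 ht i hi).1
    rw [hm0, hve] at this
    linarith
  have hD0 : D 0 = (e : ℤ) - m 1 := by rw [hD, hm0]
  have hm1 : m 1 < e := hm0 ▸ hmdec 0 ht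
  have hR0eq : R 0 = v (m 1) := by rw [hR, hm0, hve, sub_zero]
  have hR0 : 1 ≤ R 0 := by
    rw [hR0eq, hv]
    exact hbi _ hm1 (hne 1 ht)
  have hRpos : ∀ s < t, 0 < R s := by
    intro s
    induction s with
    | zero => exact fun _ => hR0
    | succ s ih =>
      intro hs
      have h1 := hslope s hs
      have h2 := mul_pos (ih (by omega)) (hDpos (s + 1) hs)
      exact pos_of_mul_pos_left (h2.trans h1) (hDpos s (by omega)).le
  have hv0 : D 0 * v 0 ≤ R 0 * (2 * e - 1) := by
    have hDq : (0 : ℚ) < (e : ℚ) - m 1 := by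
      have : (m 1 : ℚ) < e := by exact_mod_cast hm1
      linarith
    rw [div_mul_eq_mul_div, le_div_iff₀ hDq, nuQ, nuQ, ← hv, ← hv] at hbound
    rw [hD0, hR0eq]
    have : ((e : ℚ) - m 1) * v 0 ≤ v (m 1) * (2 * e - 1) := by linarith
    exact_mod_cast this
  -- Every slope is less than `e` times the first one.
  have hsteep : ∀ s < t, R s * D 0 < e * R 0 * D s := by
    intro s hs
    have hms : 0 < m s := lt_of_le_of_lt (Nat.zero_le _) (hmdec s hs)
    have hle : R s * D 0 ≤ e * R 0 * D s := by
      have h1 := (hline s hs 0 hb0).1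
      have h2 := hline0 (m s) (hne s hs.le)
      have hms' : (0 : ℤ) < m s := by exact_mod_cast hms
      refine le_of_mul_le_mul_right ?_ hms'
      have h3 := mul_le_mul_of_nonneg_left h1 (hDpos 0 ht).le
      have h4 := mul_le_mul_of_nonneg_left h2 (hDpos s hs).le
      have h5 := mul_le_mul_of_nonneg_left hv0 (hDpos s hs).le
      have h6 : 0 ≤ D s * R 0 * (((e : ℤ) - 1) * ((m s : ℤ) - 1)) :=
        mul_nonneg (mul_nonneg (hDpos s hs).le (by omega))
          (mul_nonneg (by omega) (by omega))
      push_cast at h3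
      nlinarith
    refine lt_of_le_of_ne hle fun heq => ?_
    have h1 : (e : ℤ) ∣ D 0 :=
      (hcop s hs).of_mul_left_left.dvd_of_dvd_mul_left ⟨R 0 * D s, by linarith⟩
    have h2 := Int.le_of_dvd (hDpos 0 ht) h1
    have h3 : m 1 = 0 := by omega
    have h4 : t = 1 := by
      by_contra h
      have := hmdec 1 (by omega)
      omega
    obtain rfl : s = 0 := by omega
    have h5 := mul_pos hR0 (hDpos 0 ht)
    nlinarith
  set N : ℤ := (e : ℤ) ^ n with hN
  have hNpos : 0 < N := by positivity
  set K : ℤ := 2 * (e : ℤ) ^ (n + 1) + 1 with hKdef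
  have heN : (e : ℤ) ≤ (e : ℤ) ^ (n + 1) := by
    exact_mod_cast Nat.le_self_pow (by omega) e
  have hFdeg : (polyIter g (n + 1)).natDegree = e ^ (n + 1) := by rw [natDegree_polyIter, hge]
  have hdom : ∀ s < t, ∀ σ : ℤ, σ = 1 ∨ σ = -1 → ∀ k,
      IsDominant p (K * (N * D s)) (N * (K * R s + σ)) g k →
      IsDominant p (K * (N * D s)) (K * R s + σ) (polyIter g (n + 1)) (e ^ n * k) := by
    intro s hs σ hσ k hk
    refine IsDominant.polyIter (mul_pos (by omega) (mul_pos hNpos (hDpos s hs))) hbe n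
      (fun l hl => ⟨hge ▸ leadingCoeff_ne_zero.mpr (by rintro rfl; simp at hb0), ?_⟩) hk
    intro i hie hi
    have hie' : (i : ℤ) < e := by
      have : i ≤ e := hge ▸ le_natDegree_of_ne_zero hi
      omega
    rw [← hv, ← hv, hve]
    have h1 := hline0 i hi
    have h2 := hsteep s hs
    have h3 := hRpos s hs
    have h4 : (e : ℤ) ^ l * e ≤ N := by
      rw [← pow_succ]
      exact pow_le_pow_right₀ (by omega) hl
    have hD0pos := hDpos 0 ht
    have hB : 0 < K * R s + σ := by
      rcases hσ with rfl | rfl <;> nlinarith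
    -- the slope `e ^ l * (K * R s + σ) / (K * N * D s)` is less than `R 0 / D 0`
    have h5 : (K * R s + σ) * D 0 < K * (e * R 0 * D s) := by
      have h6 := mul_le_mul_of_nonneg_left (Int.add_one_le_iff.mpr h2) (show 0 ≤ K by omega)
      have h7 : σ * D 0 < K := by
        rcases hσ with rfl | rfl <;> omega
      linarith
    have h8 : (e : ℤ) ^ l * ((K * R s + σ) * D 0) < K * (N * D s) * R 0 := by
      have h9 := mul_lt_mul_of_pos_left h5 (show (0 : ℤ) < (e : ℤ) ^ l by positivity)
      have h10 := mul_le_mul_of_nonneg_right h4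
        (mul_pos (mul_pos (show 0 < K by omega) (hDpos s hs)) hR0).le
      linarith
    have h11 := mul_lt_mul_of_pos_right h8 (sub_pos.mpr hie')
    have h12 := mul_le_mul_of_nonneg_left h1
      (mul_pos (show 0 < K by omega) (mul_pos hNpos (hDpos s hs))).le
    refine lt_of_mul_lt_mul_left (a := D 0) ?_ hD0pos.le
    linarith
  have hlt : ∀ s < t, ∀ i, g.coeff i ≠ 0 → ∀ j : ℤ, 0 ≤ j → j ≤ e → ∀ σ : ℤ, σ = 1 ∨ σ = -1 →
      (D s * v (m s) + R s * m s < D s * v i + R s * i ∨ σ * j < σ * i) →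
      K * (N * (D s * v (m s) + R s * m s)) + N * (σ * j) <
        K * (N * (D s * v i + R s * i)) + N * (σ * i) := by
    intro s hs i hi j hj0 hje σ hσ h
    have hie : (i : ℤ) ≤ e := by exact_mod_cast hge ▸ le_natDegree_of_ne_zero hi
    have h1 := (hline s hs i hi).1
    have h2 : K * (D s * v (m s) + R s * m s) + σ * j < K * (D s * v i + R s * i) + σ * i := by
      rcases h with h | h
      · have h3 := mul_le_mul_of_nonneg_left (Int.add_one_le_iff.mpr h) (show 0 ≤ K by omega)
        have h4 : σ * j - σ * i < K := by rcases hσ with rfl | rfl <;> omega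
        linarith
      · have h3 := mul_le_mul_of_nonneg_left h1 (show 0 ≤ K by omega)
        linarith
    have := mul_lt_mul_of_pos_left h2 hNpos
    linarith
  have hle : ∀ s ≤ t, (m s : ℤ) ≤ e := fun s hs => by
    exact_mod_cast hm0 ▸ le_of_strictAnti_chain hmdec s hs
  refine numFactors_le_of_isDominant (p := p) (K := K) (Q := fun s => N * D s) (R := R)
    (M := fun s => e ^ n * m s) ?_ ?_ (fun s hs => mul_pos hNpos (hDpos s hs)) ?_ ?_ ?_ ?_ ?_ ?_ ?_
  · rintro h
    rw [h, natDegree_zero] at hFdeg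
    exact (pow_pos he1 _).ne hFdeg
  · rw [hFdeg]; push_cast; omega
  · intro s _
    simp only [hD, hN]
    push_cast
    ring
  · simp only [hFdeg, hm0, pow_succ]
  · simp only [hmt, mul_zero]
  · intro s hs
    have := mul_lt_mul_of_pos_left (hslope s hs) hNpos
    linarith
  · intro s hs
    exact IsCoprime.mul_left ((hcop s hs).of_mul_left_left.pow_left) (hcop s hs).of_mul_left_right
  · intro s hs
    refine hdom s hs (-1) (.inr rfl) _ ⟨hne s hs.le, fun i his hi => ?_⟩
    have := hlt s hs i hi (m s) (by omega) (hle s hs.le) (-1) (.inr rfl) (by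
      rcases lt_or_gt_of_ne his with h | h
      · right; omega
      · left; exact (hline s hs i hi).2 (.inl h))
    rw [← hv, ← hv]
    linarith
  · intro s hs
    refine hdom s hs 1 (.inl rfl) _ ⟨hne (s + 1) hs, fun i his hi => ?_⟩
    have := hlt s hs i hi (m (s + 1)) (by omega) (hle (s + 1) hs) 1 (.inl rfl) (by
      rcases lt_or_gt_of_ne his with h | h
      · left; exact (hline s hs i hi).2 (.inr h)
      · right; omega)
    have hvert : D s * v (m (s + 1)) + R s * m (s + 1) = D s * v (m s) + R s * m s := by
      rw [hD, hR]; ring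
    rw [← hvert] at this
    rw [← hv, ← hv]
    linarith
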